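/- arXiv:1609.08751 — 2 statements merged into one kernel-verified Lean document; each statement's English description precedes it below -/
import Mathlib

section
/- Let d ≥ 2 and λ ∈ [0,1). Let T x = (x₁/‖x‖) e₁ + ((1 − 1/‖x‖) x₂ + λ) e₂ + (1 − 1/‖x‖) ∑_{j=3}^d x_j e_j and x* = √(1−λ²) e₁ + λ e₂. Then for every compact set K ⊆ H₊, the iterates T^n converge uniformly to x* on K: for every ε > 0 there exists N such that ‖T^n x − x*‖ ≤ ε for all n ≥ N and all x ∈ K. -/
noncomputable section

open Metric Set Filter

/-- Euclidean space `ℝ^d` with `d = d' + 2 ≥ 2`. -/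
abbrev Euc (d : ℕ) := EuclideanSpace ℝ (Fin (d + 2))

/-- The standard basis vectors. -/
def e (d : ℕ) (j : Fin (d + 2)) : Euc d := EuclideanSpace.single j 1

/-- The Douglas–Rachford operator for the unit sphere and the line
`L_λ = {t e₁ + λ e₂}`, given by its explicit formula
`T x = (x₁/‖x‖) e₁ + ((1 − 1/‖x‖) x₂ + λ) e₂ + (1 − 1/‖x‖) ∑_{j=3}^d x_j e_j`. -/
def DR (d : ℕ) (lam : ℝ) (x : Euc d) : Euc d :=
  (x 0 / ‖x‖) • e d 0 + ((1 - 1 / ‖x‖) * x 1 + lam) • e d 1 +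
    ∑ j ∈ Finset.univ.filter (fun j : Fin (d + 2) => 2 ≤ (j : ℕ)),
      ((1 - 1 / ‖x‖) * x j) • e d j

/-- The intersection point `x* = √(1−λ²) e₁ + λ e₂`. -/
def xStar (d : ℕ) (lam : ℝ) : Euc d := Real.sqrt (1 - lam ^ 2) • e d 0 + lam • e d 1

/-- `H₊ = {x : x₁ > 0}`. -/
def Hplus (d : ℕ) : Set (Euc d) := {x | 0 < x 0}

/-!
The function `V x = dist(x, L_λ)² / 2 + x₁² / 4 - (1 - λ²) / 2 * log x₁` is a Lyapunov function for
`T` on `H₊`: `V x - V (T x)` is a sum of three nonnegative terms, which vanish together only at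
`x*`. Its sublevel sets are compact, the logarithm keeping them away from the hyperplane `x₁ = 0`.
On such a set `V ∘ Tⁿ` decreases pointwise to `V x*`, hence uniformly by Dini's theorem, and since
`x*` is the only minimizer of `V` this forces `Tⁿ → x*` uniformly.
-/

open scoped Topology

section Lyapunov

variable {X : Type*} {C : Set X} {T : X → X} {V : X → ℝ} {p : X}

lemma antitone_comp_iterate (hT : MapsTo T C C) (hle : ∀ x ∈ C, V (T x) ≤ V x) {x : X}
    (hx : x ∈ C) : Antitone fun n ↦ V (T^[n] x) :=
  antitone_nat_of_succ_le fun n ↦ by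
    rw [Function.iterate_succ_apply']
    exact hle _ (hT.iterate n hx)

lemma apply_eq_of_mapClusterPt_of_tendsto [TopologicalSpace X] {ι Y : Type*} [TopologicalSpace Y]
    [T2Space Y] {f : X → Y} {l : Filter ι} {u : ι → X} {x : X} {y : Y} (hf : ContinuousOn f C)
    (hu : ∀ᶠ i in l, u i ∈ C) (hx : x ∈ C) (hclus : MapClusterPt x l u)
    (hy : Tendsto (fun i ↦ f (u i)) l (𝓝 y)) : f x = y := by
  obtain ⟨U, hUl, hUx⟩ := mapClusterPt_iff_ultrafilter.1 hclus
  have hUC : Tendsto u U (𝓝[C] x) := tendsto_nhdsWithin_iff.2 ⟨hUx, hu.filter_mono hUl⟩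
  exact tendsto_nhds_unique ((hf x hx).tendsto.comp hUC) (hy.mono_left hUl)

lemma tendsto_comp_iterate_of_lyapunov [TopologicalSpace X] (hC : IsCompact C)
    (hT : MapsTo T C C) (hTc : ContinuousOn T C) (hVc : ContinuousOn V C)
    (hle : ∀ x ∈ C, V (T x) ≤ V x) (heq : ∀ x ∈ C, V (T x) = V x → x = p) {x : X} (hx : x ∈ C) :
    Tendsto (fun n ↦ V (T^[n] x)) atTop (𝓝 (V p)) := by
  have horbit (n : ℕ) : T^[n] x ∈ C := hT.iterate n hx
  have hbdd : BddBelow (range fun n ↦ V (T^[n] x)) :=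
    (hC.bddBelow_image hVc).mono (range_subset_iff.2 fun n ↦ mem_image_of_mem V (horbit n))
  have hlim := tendsto_atTop_ciInf (antitone_comp_iterate hT hle hx) hbdd
  obtain ⟨y, hyC, hy⟩ := hC.exists_mapClusterPt (f := atTop) (u := fun n ↦ T^[n] x)
    (tendsto_principal.2 (.of_forall horbit))
  have hVy := apply_eq_of_mapClusterPt_of_tendsto hVc (.of_forall horbit) hyC hy hlim
  have hVTy : V (T y) = ⨅ n, V (T^[n] x) := by
    refine apply_eq_of_mapClusterPt_of_tendsto (f := V ∘ T) (hVc.comp hTc hT)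
      (.of_forall horbit) hyC hy ?_
    simpa only [Function.comp_def, Function.iterate_succ_apply'] using
      hlim.comp (tendsto_add_atTop_nat 1)
  rwa [← heq y hyC (hVTy.trans hVy.symm), hVy]

theorem tendstoUniformlyOn_iterate_of_lyapunov [UniformSpace X] (hC : IsCompact C)
    (hT : MapsTo T C C) (hTc : ContinuousOn T C) (hVc : ContinuousOn V C)
    (hle : ∀ x ∈ C, V (T x) ≤ V x) (heq : ∀ x ∈ C, V (T x) = V x → x = p) :
    TendstoUniformlyOn (fun n ↦ T^[n]) (fun _ ↦ p) atTop C := by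
  have hlim (x : X) (hx : x ∈ C) : Tendsto (fun n ↦ V (T^[n] x)) atTop (𝓝 (V p)) :=
    tendsto_comp_iterate_of_lyapunov hC hT hTc hVc hle heq hx
  have hVunif : TendstoUniformlyOn (fun n x ↦ V (T^[n] x)) (fun _ ↦ V p) atTop C :=
    Antitone.tendstoUniformlyOn_of_forall_tendsto hC
      (fun n ↦ hVc.comp (hTc.iterate hT n) (hT.iterate n))
      (fun _ ↦ antitone_comp_iterate hT hle) continuousOn_const hlim
  have hmin (x : X) (hx : x ∈ C) (hVx : V x = V p) : x = p := by
    have hVp : V p ≤ V (T x) := (antitone_comp_iterate hT hle hx).le_of_tendsto (hlim x hx) 1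
    exact heq x hx ((hle x hx).antisymm (hVx.trans_le hVp))
  have hmem : ∀ᶠ q : ℕ × X in atTop ×ˢ 𝓟 C, T^[q.1] q.2 ∈ C :=
    eventually_prod_principal_iff.2 (.of_forall fun n _ hx ↦ hT.iterate n hx)
  refine tendsto_prod_principal_iff.1 (hC.tendsto_nhds_of_unique_mapClusterPt hmem ?_)
  exact fun y hyC hy ↦ hmin y hyC
    (apply_eq_of_mapClusterPt_of_tendsto hVc hmem hyC hy (tendsto_prod_principal_iff.2 hVunif))

end Lyapunov

section DouglasRachford

variable {d : ℕ} {lam : ℝ} {x : Euc d}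

/-- The orthogonal projection of `x` onto the line `L_λ`, so that `‖x - lineProj lam x‖` is
the distance from `x` to `L_λ`. -/
def lineProj (lam : ℝ) (x : Euc d) : Euc d := x 0 • e d 0 + lam • e d 1

/-- The Lyapunov function `dist(x, L_λ)² / 2 + x₁² / 4 - (1 - λ²) / 2 * log x₁` of the
Douglas–Rachford operator on `H₊`. -/
def lyapunov (lam : ℝ) (x : Euc d) : ℝ :=
  ‖x - lineProj lam x‖ ^ 2 / 2 + x 0 ^ 2 / 4 - (1 - lam ^ 2) / 2 * Real.log (x 0)

lemma norm_pos_of_mem_Hplus (hx : x ∈ Hplus d) : 0 < ‖x‖ :=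
  norm_pos_iff.2 fun h ↦ by simp [Hplus, h] at hx

lemma sq_norm_smul_e_add_smul_e (a b : ℝ) : ‖a • e d 0 + b • e d 1‖ ^ 2 = a ^ 2 + b ^ 2 := by
  simp [norm_add_sq_real, norm_smul, inner_smul_left, inner_smul_right, e,
    EuclideanSpace.inner_single_right]

lemma sq_norm_sub_smul_e_add_smul_e (a b : ℝ) (x : Euc d) :
    ‖x - (a • e d 0 + b • e d 1)‖ ^ 2 = ‖x‖ ^ 2 - 2 * a * x 0 - 2 * b * x 1 + a ^ 2 + b ^ 2 := by
  rw [norm_sub_sq_real, sq_norm_smul_e_add_smul_e]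
  simp only [inner_add_right, inner_smul_right, e, EuclideanSpace.inner_single_right,
    Real.ringHom_apply, one_mul]
  ring

lemma sq_norm_sub_lineProj (lam : ℝ) (x : Euc d) :
    ‖x - lineProj lam x‖ ^ 2 = ‖x‖ ^ 2 - x 0 ^ 2 - 2 * lam * x 1 + lam ^ 2 := by
  rw [lineProj, sq_norm_sub_smul_e_add_smul_e]
  ring

lemma DR_eq_lineProj_add (lam : ℝ) (x : Euc d) :
    DR d lam x = lineProj lam (‖x‖⁻¹ • x) + (1 - 1 / ‖x‖) • (x - lineProj 0 x) := by
  ext j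
  refine Fin.cases ?_ (Fin.cases ?_ fun i ↦ ?_) j
  · simp [DR, lineProj, e, Pi.single_apply, div_eq_inv_mul]
  · simp [DR, lineProj, e, Pi.single_apply, add_comm]
  · have hi : i.succ.succ ≠ (1 : Fin (d + 2)) := by simp [Fin.ext_iff]
    simp [DR, lineProj, e, Pi.single_apply, hi]

lemma DR_apply_zero (lam : ℝ) (x : Euc d) : DR d lam x 0 = x 0 / ‖x‖ := by
  simp [DR_eq_lineProj_add, lineProj, e, div_eq_inv_mul]

lemma mapsTo_DR_Hplus (lam : ℝ) : MapsTo (DR d lam) (Hplus d) (Hplus d) := fun x hx ↦ by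
  simpa only [Hplus, mem_ofPred_eq, DR_apply_zero] using div_pos hx (norm_pos_of_mem_Hplus hx)

lemma DR_sub_lineProj_DR (lam : ℝ) (x : Euc d) :
    DR d lam x - lineProj lam (DR d lam x) = (1 - 1 / ‖x‖) • (x - lineProj 0 x) := by
  have hproj : lineProj lam (DR d lam x) = lineProj lam (‖x‖⁻¹ • x) := by
    simp [lineProj, DR_apply_zero, div_eq_inv_mul]
  rw [hproj, DR_eq_lineProj_add, add_sub_cancel_left]

lemma lyapunov_sub_lyapunov_DR (hx : x ∈ Hplus d) :
    lyapunov lam x - lyapunov lam (DR d lam x) =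
      ‖x‖ / 2 * ‖‖x‖⁻¹ • x - lineProj lam (‖x‖⁻¹ • x)‖ ^ 2 + (x 0 - x 0 / ‖x‖) ^ 2 / 4 +
        (1 - lam ^ 2) / 2 * (‖x‖ - 1 - Real.log ‖x‖) := by
  have hr : ‖x‖ ≠ 0 := (norm_pos_of_mem_Hplus hx).ne'
  have hunit : ‖‖x‖⁻¹ • x‖ = 1 := norm_smul_inv_norm (norm_ne_zero_iff.1 hr)
  simp only [lyapunov, DR_sub_lineProj_DR, norm_smul, mul_pow, Real.norm_eq_abs, sq_abs,
    sq_norm_sub_lineProj, hunit, DR_apply_zero, PiLp.smul_apply, smul_eq_mul]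
  rw [Real.log_div (ne_of_gt hx) hr]
  field_simp
  ring

lemma lyapunov_DR_le (hlam : |lam| ≤ 1) (hx : x ∈ Hplus d) :
    lyapunov lam (DR d lam x) ≤ lyapunov lam x := by
  have hs : 0 ≤ 1 - lam ^ 2 := sub_nonneg.2 ((sq_le_one_iff_abs_le_one lam).2 hlam)
  have hlog : 0 ≤ ‖x‖ - 1 - Real.log ‖x‖ :=
    sub_nonneg.2 (Real.log_le_sub_one_of_pos (norm_pos_of_mem_Hplus hx))
  rw [← sub_nonneg, lyapunov_sub_lyapunov_DR hx]
  positivity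

lemma eq_xStar_of_norm_eq_one_of_eq_lineProj (hx : x ∈ Hplus d) (hnorm : ‖x‖ = 1)
    (hline : x = lineProj lam x) : x = xStar d lam := by
  have hsq : x 0 ^ 2 = 1 - lam ^ 2 := by
    have hsq_norm : ‖lineProj lam x‖ ^ 2 = x 0 ^ 2 + lam ^ 2 := sq_norm_smul_e_add_smul_e _ _
    rw [← hline, hnorm] at hsq_norm
    linarith
  rw [xStar, ← hsq, Real.sqrt_sq (le_of_lt hx)]
  exact hline

lemma eq_xStar_of_lyapunov_DR_eq (hlam : |lam| < 1) (hx : x ∈ Hplus d)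
    (heq : lyapunov lam (DR d lam x) = lyapunov lam x) : x = xStar d lam := by
  have hs : 0 < 1 - lam ^ 2 := sub_pos.2 ((sq_lt_one_iff_abs_lt_one lam).2 hlam)
  have hr := norm_pos_of_mem_Hplus hx
  have hdrop := lyapunov_sub_lyapunov_DR (lam := lam) hx
  rw [heq, sub_self] at hdrop
  have hnorm : ‖x‖ = 1 := by
    by_contra hne
    have hlog : 0 < ‖x‖ - 1 - Real.log ‖x‖ := sub_pos.2 (Real.log_lt_sub_one_of_pos hr hne)
    exact hdrop.not_lt (by positivity)
  have hline : ‖x - lineProj lam x‖ = 0 := by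
    simpa [hnorm] using hdrop.symm
  exact eq_xStar_of_norm_eq_one_of_eq_lineProj hx hnorm (sub_eq_zero.1 (norm_eq_zero.1 hline))

-- The centre is the minimizer of the quadratic obtained from `lyapunov` by `log t ≤ t - 1`.
lemma sq_norm_sub_le_four_mul_lyapunov (hlam : |lam| ≤ 1) (hx : x ∈ Hplus d) :
    ‖x - ((1 - lam ^ 2) • e d 0 + lam • e d 1)‖ ^ 2 ≤ 4 * lyapunov lam x := by
  have hs : 0 ≤ 1 - lam ^ 2 := sub_nonneg.2 ((sq_le_one_iff_abs_le_one lam).2 hlam)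
  have hlog : (1 - lam ^ 2) * Real.log (x 0) ≤ (1 - lam ^ 2) * (x 0 - 1) :=
    mul_le_mul_of_nonneg_left (Real.log_le_sub_one_of_pos hx) hs
  have hproj := sq_nonneg ‖x - lineProj lam x‖
  rw [sq_norm_sub_smul_e_add_smul_e]
  unfold lyapunov
  rw [sq_norm_sub_lineProj] at hproj ⊢
  nlinarith [sq_nonneg lam]

lemma exp_neg_le_of_lyapunov_le (hlam : |lam| < 1) (hx : x ∈ Hplus d) {M : ℝ}
    (hM : lyapunov lam x ≤ M) : Real.exp (-(2 * M / (1 - lam ^ 2))) ≤ x 0 := by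
  have hs : 0 < 1 - lam ^ 2 := sub_pos.2 ((sq_lt_one_iff_abs_lt_one lam).2 hlam)
  have hquad : 0 ≤ ‖x - lineProj lam x‖ ^ 2 / 2 + x 0 ^ 2 / 4 := by positivity
  rw [← Real.le_log_iff_exp_le hx, neg_le, le_div_iff₀ hs]
  unfold lyapunov at hM
  linarith

lemma continuousOn_lyapunov (lam : ℝ) : ContinuousOn (lyapunov lam) (Hplus d) := by
  have hlog : ContinuousOn (fun x : Euc d ↦ Real.log (x 0)) (Hplus d) :=
    ContinuousOn.log (by fun_prop) fun x hx ↦ ne_of_gt hx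
  unfold lyapunov lineProj
  fun_prop

lemma continuousOn_DR (lam : ℝ) : ContinuousOn (DR d lam) (Hplus d) := by
  have hne : ∀ x ∈ Hplus d, ‖x‖ ≠ 0 := fun x hx ↦ (norm_pos_of_mem_Hplus hx).ne'
  unfold DR
  fun_prop (disch := assumption)

lemma isCompact_lyapunov_sublevel (hlam : |lam| < 1) (M : ℝ) :
    IsCompact {x ∈ Hplus d | lyapunov lam x ≤ M} := by
  set m := Real.exp (-(2 * M / (1 - lam ^ 2)))
  set A : Set (Euc d) :=
    closedBall ((1 - lam ^ 2) • e d 0 + lam • e d 1) √(4 * M) ∩ {x | m ≤ x 0}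
  have hA : IsCompact A :=
    (isCompact_closedBall _ _).inter_right (isClosed_le continuous_const (by fun_prop))
  have hAH : A ⊆ Hplus d := fun x hx ↦ (Real.exp_pos _).trans_le hx.2
  have hsub : {x ∈ Hplus d | lyapunov lam x ≤ M} = A ∩ lyapunov lam ⁻¹' Iic M := by
    refine Subset.antisymm (fun x ⟨hx, hM⟩ ↦ ?_) fun x ⟨hxA, hM⟩ ↦ ⟨hAH hxA, hM⟩
    have hball := sq_norm_sub_le_four_mul_lyapunov hlam.le hx
    refine ⟨⟨?_, exp_neg_le_of_lyapunov_le hlam hx hM⟩, hM⟩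
    exact mem_closedBall_iff_norm.2 (Real.le_sqrt_of_sq_le (hball.trans (by gcongr)))
  rw [hsub]
  exact hA.of_isClosed_subset (((continuousOn_lyapunov lam).mono hAH).preimage_isClosed_of_isClosed
    hA.isClosed isClosed_Iic) inter_subset_left

end DouglasRachford

theorem stmt14_general (d : ℕ) (lam : ℝ) (hlam : |lam| < 1) (K : Set (Euc d)) (hK : K ⊆ Hplus d)
    (hKc : IsCompact K) :
    TendstoUniformlyOn (fun n ↦ (DR d lam)^[n]) (fun _ ↦ xStar d lam) atTop K := by
  obtain ⟨M, hM⟩ := hKc.bddAbove_image ((continuousOn_lyapunov lam).mono hK)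
  set C : Set (Euc d) := {x ∈ Hplus d | lyapunov lam x ≤ M}
  have hKC : K ⊆ C := fun x hx ↦ ⟨hK hx, hM (mem_image_of_mem _ hx)⟩
  have hCH : C ⊆ Hplus d := sep_subset _ _
  have hmaps : MapsTo (DR d lam) C C := fun x hx ↦
    ⟨mapsTo_DR_Hplus lam hx.1, (lyapunov_DR_le hlam.le hx.1).trans hx.2⟩
  exact (tendstoUniformlyOn_iterate_of_lyapunov (isCompact_lyapunov_sublevel hlam M) hmaps
    ((continuousOn_DR lam).mono hCH) ((continuousOn_lyapunov lam).mono hCH)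
    (fun x hx ↦ lyapunov_DR_le hlam.le hx.1)
    (fun x hx ↦ eq_xStar_of_lyapunov_DR_eq hlam hx.1)).mono hKC

/-- For `λ ∈ [0,1)` and every compact `K ⊆ H₊`, the iterates `T^n`
converge uniformly to `x*` on `K`. -/
theorem stmt14 (d : ℕ) (lam : ℝ) (h0 : 0 ≤ lam) (h1 : lam < 1) :
    ∀ K : Set (Euc d), K ⊆ Hplus d → IsCompact K →
      ∀ ε : ℝ, 0 < ε → ∃ N : ℕ, ∀ n ≥ N, ∀ x ∈ K,
        ‖(DR d lam)^[n] x - xStar d lam‖ ≤ ε := by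
  intro K hK hKc ε hε
  have hunif := stmt14_general d lam (abs_lt.2 ⟨by linarith, h1⟩) K hK hKc
  obtain ⟨N, hN⟩ := eventually_atTop.1 (Metric.tendstoUniformlyOn_iff.1 hunif ε hε)
  exact ⟨N, fun n hn x hx ↦ by simpa only [dist_eq_norm'] using (hN n hn x hx).le⟩
end
end

section
/- Let D ⊆ ℝ^d be open, let T : D → Set(D) be a set-valued map such that T x is non-empty and compact for every x ∈ D, and let ω₁, ω₂ : D → [0,∞) be continuous. Let A = { x ∈ D : ω₁(φ(n)) = 0 for every n ∈ ℕ and every solution φ of the inclusion φ(n+1) ∈ T(φ(n)), φ(0) = x }. Suppose there exists a continuous Lyapunov function V : D → [0,∞): there exist α₁, α₂ : [0,∞) → [0,∞) continuous, strictly increasing, unbounded with α₁(0) = α₂(0) = 0 (class K∞), and a continuous function α : [0,∞) → [0,∞) with α(t) = 0 iff t = 0 (positive definite), such that for all x ∈ D: α₁(ω₁(x)) ≤ V(x) ≤ α₂(ω₂(x)); sup_{y ∈ T x} V(y) ≤ V(x) − α(V(x)); and V(x) = 0 if and only if x ∈ A. Then the difference inclusion x_{n+1} ∈ T x_n is KL-stable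 with respect to (ω₁, ω₂): there exists a class-KL function β such that ω₁(φ(n)) ≤ β(ω₂(x), n) for every x ∈ D, every n ∈ ℕ, and every solution φ with φ(0) = x and φ(m+1) ∈ T(φ(m)) for all m. -/
noncomputable section

open Metric Set Filter

/-- A solution of the difference inclusion `x_{n+1} ∈ T x_n` with initial condition `x`. -/
def IsSolution {E : Type*} (T : E → Set E) (x : E) (φ : ℕ → E) : Prop :=
  φ 0 = x ∧ ∀ n : ℕ, φ (n + 1) ∈ T (φ n)

/-- The set `A = {x ∈ D : ω₁(φ(n)) = 0 for every n and every solution φ starting at x}`. -/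
def ASet {E : Type*} (D : Set E) (T : E → Set E) (ω₁ : E → ℝ) : Set E :=
  {x | x ∈ D ∧ ∀ φ : ℕ → E, IsSolution T x φ → ∀ n : ℕ, ω₁ (φ n) = 0}

/-- A function `α : [0,∞) → [0,∞)` of class `K∞`: continuous, strictly increasing,
`α(0) = 0`, and `α(t) → ∞` as `t → ∞`. -/
def IsClassKInf (a : ℝ → ℝ) : Prop :=
  (∀ t : ℝ, 0 ≤ t → 0 ≤ a t) ∧ ContinuousOn a (Ici 0) ∧ StrictMonoOn a (Ici 0) ∧
    a 0 = 0 ∧ Tendsto a atTop atTop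

/-- A function `β : [0,∞) × [0,∞) → [0,∞)` is of class `KL` if for every `t ≥ 0` the map
`s ↦ β(s,t)` is continuous, strictly increasing and `β(0,t) = 0`, and for every `s ≥ 0` the
map `t ↦ β(s,t)` is non-increasing and tends to `0` as `t → ∞`. -/
def IsClassKL (β : ℝ → ℝ → ℝ) : Prop :=
  (∀ s t : ℝ, 0 ≤ s → 0 ≤ t → 0 ≤ β s t) ∧
  (∀ t : ℝ, 0 ≤ t → ContinuousOn (fun s => β s t) (Ici 0)) ∧
  (∀ t : ℝ, 0 ≤ t → StrictMonoOn (fun s => β s t) (Ici 0)) ∧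
  (∀ t : ℝ, 0 ≤ t → β 0 t = 0) ∧
  (∀ s : ℝ, 0 ≤ s → AntitoneOn (fun t => β s t) (Ici 0)) ∧
  (∀ s : ℝ, 0 ≤ s → Tendsto (fun t => β s t) atTop (nhds 0))

/-!
Along a solution, `V` decreases at least as fast as the scalar recursion `v ↦ v - α v`, which need
not be monotone. Replacing `α s` by the distance `δ s` from `(s, 0)` to the epigraph of `α` repairs
this: `δ ≤ α` is still positive definite and is `1`-Lipschitz, so `g s = s - δ s` is continuous and
monotone. Its iterates decrease to the only nonnegative fixed point `0`, and the sandwich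
inequalities turn `V (φ n) ≤ g^[n] (V x)` into `ω₁ (φ n) ≤ α₁⁻¹ (g^[n] (α₂ (ω₂ x)))`. A vanishing
term added inside `α₁⁻¹` makes the bound strictly increasing in `ω₂ x`.
-/

section EpigraphDist

variable {X : Type*} [PseudoMetricSpace X] {f : X → ℝ} {S : Set X} {x : X}

/-- The distance from `(x, 0)` to the epigraph of `f` over `S`, in the sup metric of `X × ℝ`. It
serves as a `1`-Lipschitz minorant on `S` of a nonnegative lower semicontinuous `f`, positive
wherever `f` is. -/
def epigraphDist (f : X → ℝ) (S : Set X) (x : X) : ℝ :=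
  infDist (x, 0) {p : X × ℝ | p.1 ∈ S ∧ f p.1 ≤ p.2}

theorem lipschitzWith_epigraphDist : LipschitzWith 1 (epigraphDist f S) := by
  simpa only [one_mul] using! (lipschitz_infDist_pt _).comp (LipschitzWith.prodMk_right (0 : ℝ))

theorem epigraphDist_le (hx : x ∈ S) (hfx : 0 ≤ f x) : epigraphDist f S x ≤ f x := by
  have hmem : (x, f x) ∈ {p : X × ℝ | p.1 ∈ S ∧ f p.1 ≤ p.2} := ⟨hx, le_rfl⟩
  simpa [epigraphDist, Prod.dist_eq, abs_of_nonneg hfx, hfx] using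
    infDist_le_dist_of_mem (x := (x, 0)) hmem

theorem epigraphDist_pos (hS : IsClosed S) (hf : LowerSemicontinuousOn f S) (hx : x ∈ S)
    (hfx : 0 < f x) : 0 < epigraphDist f S x := by
  have hclosed := (lowerSemicontinuousOn_iff_isClosed_epigraph hS).1 hf
  exact (hclosed.notMem_iff_infDist_pos ⟨(x, f x), hx, le_rfl⟩).1 fun hmem => hmem.2.not_gt hfx

end EpigraphDist

theorem monotone_id_sub_of_lipschitzWith_one {f : ℝ → ℝ} (hf : LipschitzWith 1 f) :
    Monotone fun s => s - f s := by
  intro s t hst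
  have hdist : f t - f s ≤ t - s := by
    simpa [Real.dist_eq, abs_of_nonneg (sub_nonneg.2 hst)] using
      (le_abs_self _).trans (hf.dist_le_mul t s)
  linarith

theorem exists_continuous_monotone_ge_id_sub {α : ℝ → ℝ} (hα : LowerSemicontinuousOn α (Ici 0))
    (hα0 : α 0 = 0) (hαpos : ∀ s, 0 < s → 0 < α s) :
    ∃ g : ℝ → ℝ, Continuous g ∧ Monotone g ∧ g 0 = 0 ∧ (∀ s, 0 < s → g s < s) ∧
      ∀ s, 0 ≤ s → s - α s ≤ g s := by
  have hαnn : ∀ s, 0 ≤ s → 0 ≤ α s := fun s hs =>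
    hs.eq_or_lt.elim (fun h => h ▸ hα0.ge) fun h => (hαpos s h).le
  have hlip : LipschitzWith 1 (epigraphDist α (Ici 0)) := lipschitzWith_epigraphDist
  have hle : ∀ s, 0 ≤ s → epigraphDist α (Ici 0) s ≤ α s := fun s hs =>
    epigraphDist_le hs (hαnn s hs)
  have hzero : epigraphDist α (Ici 0) 0 = 0 :=
    le_antisymm ((hle 0 le_rfl).trans_eq hα0) infDist_nonneg
  refine ⟨fun s => s - epigraphDist α (Ici 0) s, continuous_id.sub hlip.continuous,
    monotone_id_sub_of_lipschitzWith_one hlip, by simp [hzero], fun s hs => sub_lt_self s ?_,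
    fun s hs => sub_le_sub_left (hle s hs) s⟩
  exact epigraphDist_pos isClosed_Ici hα hs.le (hαpos s hs)

theorem tendsto_iterate_of_lt_self {X : Type*} [ConditionallyCompleteLinearOrder X]
    [TopologicalSpace X] [OrderTopology X] {g : X → X} {a s : X} (hg : Continuous g)
    (hmono : Monotone g) (hfix : g a = a) (hlt : ∀ t, a < t → g t < t) (hs : a ≤ s) :
    Tendsto (fun n => g^[n] s) atTop (nhds a) := by
  have hge : ∀ n, a ≤ g^[n] s := fun n =>
    (Function.iterate_fixed hfix n).ge.trans (hmono.iterate n hs)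
  have hanti : Antitone fun n => g^[n] s :=
    hmono.antitone_iterate_of_map_le <|
      hs.eq_or_lt.elim (fun h => h ▸ hfix.le) fun h => (hlt s h).le
  have hlim := tendsto_atTop_ciInf hanti ⟨a, forall_mem_range.2 hge⟩
  have hinf_fix : g (⨅ n, g^[n] s) = ⨅ n, g^[n] s :=
    isFixedPt_of_tendsto_iterate hlim hg.continuousAt
  rcases (le_ciInf hge).eq_or_lt with heq | hpos
  · rwa [← heq] at hlim
  · exact absurd hinf_fix (hlt _ hpos).ne

namespace IsClassKInf

theorem exists_orderIso {a : ℝ → ℝ} (ha : IsClassKInf a) :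
    ∃ e : ℝ ≃o ℝ, EqOn e a (Ici 0) := by
  obtain ⟨-, hcont, hmono, hzero, htop⟩ := ha
  let b : ℝ → ℝ := fun t => a (max t 0) + min t 0
  have hb_nonneg : EqOn b a (Ici 0) := fun t (ht : 0 ≤ t) => by simp [b, ht]
  have hb_nonpos : EqOn b id (Iic 0) := fun t (ht : t ≤ 0) => by simp [b, ht, hzero]
  have hb_cont : Continuous b :=
    (hcont.comp_continuous (by fun_prop) fun t => le_max_right t 0).add (by fun_prop)
  have hb_mono : StrictMono b :=
    (strictMonoOn_id.congr hb_nonpos.symm).Iic_union_Ici (hmono.congr hb_nonneg.symm)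
  have hb_surj : Function.Surjective b :=
    hb_cont.surjective
      (htop.congr' <| hb_nonneg.symm.eventuallyEq_of_mem <| Ici_mem_atTop 0)
      (tendsto_id.congr' <| hb_nonpos.symm.eventuallyEq_of_mem <| Iic_mem_atBot 0)
  exact ⟨hb_mono.orderIsoOfSurjective b hb_surj, hb_nonneg⟩

theorem of_orderIso {e : ℝ ≃o ℝ} (he : e 0 = 0) : IsClassKInf e :=
  ⟨fun _ ht => he.ge.trans (e.monotone ht), e.continuous.continuousOn,
    e.strictMono.strictMonoOn _, he, e.tendsto_atTop⟩

theorem exists_leftInvOn {a : ℝ → ℝ} (ha : IsClassKInf a) :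
    ∃ γ, IsClassKInf γ ∧ LeftInvOn γ a (Ici 0) := by
  obtain ⟨e, he⟩ := ha.exists_orderIso
  have hinv : LeftInvOn e.symm a (Ici 0) := fun t ht => by rw [← he ht, e.symm_apply_apply]
  have hsymm_zero : e.symm 0 = 0 := by
    simpa only [ha.2.2.2.1] using hinv (self_mem_Ici (a := (0 : ℝ)))
  exact ⟨e.symm, of_orderIso hsymm_zero, hinv⟩

theorem comp_isClassKL {γ : ℝ → ℝ} {β : ℝ → ℝ → ℝ} (hγ : IsClassKInf γ) (hβ : IsClassKL β) :
    IsClassKL fun s t => γ (β s t) := by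
  obtain ⟨γ_nonneg, γ_cont, γ_mono, γ_zero, -⟩ := hγ
  obtain ⟨β_nonneg, β_cont, β_mono, β_zero, β_anti, β_lim⟩ := hβ
  refine ⟨fun s t hs ht => γ_nonneg _ (β_nonneg s t hs ht),
    fun t ht => γ_cont.comp (β_cont t ht) fun s hs => β_nonneg s t hs ht,
    fun t ht => γ_mono.comp (β_mono t ht) fun s hs => β_nonneg s t hs ht,
    fun t ht => by simp only [β_zero t ht, γ_zero],
    fun s hs t ht t' ht' htt' => γ_mono.monotoneOn (β_nonneg s t' hs ht') (β_nonneg s t hs ht)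
      (β_anti s hs ht ht' htt'),
    fun s hs => ?_⟩
  have hlim : Tendsto (β s) atTop (nhdsWithin 0 (Ici 0)) :=
    tendsto_nhdsWithin_iff.2
      ⟨β_lim s hs, (eventually_ge_atTop 0).mono fun t ht => β_nonneg s t hs ht⟩
  simpa only [γ_zero] using! (γ_cont 0 self_mem_Ici).tendsto.comp hlim

end IsClassKInf

theorem IsClassKL.comp_isClassKInf {β : ℝ → ℝ → ℝ} {α : ℝ → ℝ} (hβ : IsClassKL β)
    (hα : IsClassKInf α) : IsClassKL fun s t => β (α s) t := by
  obtain ⟨α_nonneg, α_cont, α_mono, α_zero, -⟩ := hα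
  obtain ⟨β_nonneg, β_cont, β_mono, β_zero, β_anti, β_lim⟩ := hβ
  exact ⟨fun s t hs ht => β_nonneg _ t (α_nonneg s hs) ht,
    fun t ht => (β_cont t ht).comp α_cont α_nonneg,
    fun t ht => (β_mono t ht).comp α_mono α_nonneg,
    fun t ht => by simp only [α_zero, β_zero t ht],
    fun s hs => β_anti _ (α_nonneg s hs),
    fun s hs => β_lim _ (α_nonneg s hs)⟩

-- The summand `s / (1 + t)` provides strict monotonicity in `s`, which `g^[n]` may lack.
theorem isClassKL_iterate_add_div {g : ℝ → ℝ} (hg : Continuous g) (hmono : Monotone g)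
    (hzero : g 0 = 0) (hlt : ∀ s, 0 < s → g s < s) :
    IsClassKL fun s t => g^[⌊t⌋₊] s + s / (1 + t) := by
  have hiter_zero : ∀ n, g^[n] 0 = 0 := Function.iterate_fixed hzero
  have hle : ∀ s, 0 ≤ s → g s ≤ s := fun s hs =>
    hs.eq_or_lt.elim (fun h => h ▸ hzero.le) fun h => (hlt s h).le
  refine ⟨fun s t hs ht => ?nonneg, fun t _ => ?continuous, fun t ht => ?strictMono,
    fun t _ => ?zero, fun s hs => ?antitone, fun s hs => ?tendsto⟩
  case nonneg =>
    exact add_nonneg ((hiter_zero _).ge.trans (hmono.iterate _ hs)) (by positivity)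
  case continuous =>
    exact ((hg.iterate _).add (continuous_id.div_const _)).continuousOn
  case strictMono =>
    have ht' : 0 < 1 + t := by positivity
    exact ((hmono.iterate _).add_strictMono fun _ _ h =>
      div_lt_div_of_pos_right h ht').strictMonoOn _
  case zero => simp [hiter_zero]
  case antitone =>
    intro t (ht : 0 ≤ t) t' _ htt'
    have hiter := hmono.antitone_iterate_of_map_le (hle s hs) (Nat.floor_mono htt')
    have hdiv : s / (1 + t') ≤ s / (1 + t) := by gcongr
    exact add_le_add hiter hdiv
  case tendsto =>
    have hiter : Tendsto (fun t : ℝ => g^[⌊t⌋₊] s) atTop (nhds 0) :=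
      (tendsto_iterate_of_lt_self hg hmono hzero hlt hs).comp tendsto_nat_floor_atTop
    have hdiv : Tendsto (fun t : ℝ => s / (1 + t)) atTop (nhds 0) :=
      tendsto_const_nhds.div_atTop (tendsto_atTop_add_const_left _ 1 tendsto_id)
    simpa only [add_zero] using hiter.add hdiv

namespace IsSolution

variable {E : Type*} {D : Set E} {T : E → Set E} {x : E} {φ : ℕ → E}

theorem mem (hφ : IsSolution T x φ) (hTD : ∀ y ∈ D, T y ⊆ D) (hx : x ∈ D) (n : ℕ) : φ n ∈ D := by
  induction n with
  | zero => rwa [hφ.1]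
  | succ n ih => exact hTD _ ih (hφ.2 n)

theorem le_iterate {R : Type*} [Preorder R] {V : E → R} {g : R → R} (hφ : IsSolution T x φ)
    (hTD : ∀ y ∈ D, T y ⊆ D) (hx : x ∈ D) (hg : Monotone g)
    (hdec : ∀ y ∈ D, ∀ z ∈ T y, V z ≤ g (V y)) (n : ℕ) : V (φ n) ≤ g^[n] (V x) :=
  hg.seq_le_seq (x := fun k => V (φ k)) (y := fun k => g^[k] (V x)) n (by simp [hφ.1])
    (fun k _ => hdec _ (hφ.mem hTD hx k) _ (hφ.2 k))
    fun k _ => (Function.iterate_succ_apply' g k _).ge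

end IsSolution

theorem stmt19_general {E : Type*} {D : Set E} {T : E → Set E} {ω₁ ω₂ V : E → ℝ}
    (hTD : ∀ x ∈ D, T x ⊆ D) (hω₁ : ∀ x ∈ D, 0 ≤ ω₁ x) (hω₂ : ∀ x ∈ D, 0 ≤ ω₂ x)
    {α₁ α₂ α : ℝ → ℝ} (hα₁ : IsClassKInf α₁) (hα₂ : IsClassKInf α₂)
    (hα : LowerSemicontinuousOn α (Ici 0)) (hα0 : α 0 = 0) (hαpos : ∀ t, 0 < t → 0 < α t)
    (hsand : ∀ x ∈ D, α₁ (ω₁ x) ≤ V x ∧ V x ≤ α₂ (ω₂ x))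
    (hdec : ∀ x ∈ D, ∀ y ∈ T x, V y ≤ V x - α (V x)) :
    ∃ β : ℝ → ℝ → ℝ, IsClassKL β ∧
      ∀ x ∈ D, ∀ φ : ℕ → E, IsSolution T x φ → ∀ n : ℕ, ω₁ (φ n) ≤ β (ω₂ x) n := by
  obtain ⟨g, hg, hmono, hzero, hlt, hge⟩ := exists_continuous_monotone_ge_id_sub hα hα0 hαpos
  obtain ⟨γ, hγ, hγα₁⟩ := hα₁.exists_leftInvOn
  refine ⟨_, hγ.comp_isClassKL
    ((isClassKL_iterate_add_div hg hmono hzero hlt).comp_isClassKInf hα₂), fun x hx φ hφ n => ?_⟩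
  have hα₁_nonneg : ∀ y ∈ D, 0 ≤ α₁ (ω₁ y) := fun y hy => hα₁.1 _ (hω₁ y hy)
  have hV_step : ∀ y ∈ D, ∀ z ∈ T y, V z ≤ g (V y) := fun y hy z hz =>
    (hdec y hy z hz).trans (hge _ ((hα₁_nonneg y hy).trans (hsand y hy).1))
  have hγ_mono : StrictMonoOn γ (Ici 0) := hγ.2.2.1
  have hφn : φ n ∈ D := hφ.mem hTD hx n
  have hbound : α₁ (ω₁ (φ n)) ≤ g^[⌊(n : ℝ)⌋₊] (α₂ (ω₂ x)) + α₂ (ω₂ x) / (1 + n) := calc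
    α₁ (ω₁ (φ n)) ≤ V (φ n) := (hsand _ hφn).1
    _ ≤ g^[n] (V x) := hφ.le_iterate hTD hx hmono hV_step n
    _ ≤ g^[n] (α₂ (ω₂ x)) := hmono.iterate n (hsand x hx).2
    _ ≤ g^[⌊(n : ℝ)⌋₊] (α₂ (ω₂ x)) + α₂ (ω₂ x) / (1 + n) := by
      rw [Nat.floor_natCast]
      exact le_add_of_nonneg_right (div_nonneg (hα₂.1 _ (hω₂ x hx)) (by positivity))
  calc
    ω₁ (φ n) = γ (α₁ (ω₁ (φ n))) := (hγα₁ (hω₁ _ hφn)).symm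
    _ ≤ γ (g^[⌊(n : ℝ)⌋₊] (α₂ (ω₂ x)) + α₂ (ω₂ x) / (1 + n)) :=
      hγ_mono.monotoneOn (hα₁_nonneg _ hφn) ((hα₁_nonneg _ hφn).trans hbound) hbound

/-- Kellett–Teel, Thm. 2.8, unperturbed consequence. If `D ⊆ ℝ^d` is
open, `T : D ⇉ D` has non-empty compact values, `ω₁, ω₂ : D → [0,∞)` are continuous, and
there is a continuous Lyapunov function `V` with respect to `(ω₁, ω₂)`, then the difference
inclusion `x_{n+1} ∈ T x_n` is `KL`-stable with respect to `(ω₁, ω₂)`. -/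
theorem stmt19 (d : ℕ) (D : Set (EuclideanSpace ℝ (Fin d)))
    (T : EuclideanSpace ℝ (Fin d) → Set (EuclideanSpace ℝ (Fin d)))
    (ω₁ ω₂ V : EuclideanSpace ℝ (Fin d) → ℝ)
    (hD : IsOpen D)
    (hTne : ∀ x ∈ D, (T x).Nonempty)
    (hTcpt : ∀ x ∈ D, IsCompact (T x))
    (hTD : ∀ x ∈ D, T x ⊆ D)
    (hw1 : ContinuousOn ω₁ D) (hw2 : ContinuousOn ω₂ D)
    (hw1nn : ∀ x ∈ D, 0 ≤ ω₁ x) (hw2nn : ∀ x ∈ D, 0 ≤ ω₂ x)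
    (hVcont : ContinuousOn V D) (hVnn : ∀ x ∈ D, 0 ≤ V x)
    (α₁ α₂ : ℝ → ℝ) (hα₁ : IsClassKInf α₁) (hα₂ : IsClassKInf α₂)
    (α : ℝ → ℝ) (hαnn : ∀ t : ℝ, 0 ≤ t → 0 ≤ α t)
    (hαcont : ContinuousOn α (Ici 0))
    (hαpd : ∀ t : ℝ, 0 ≤ t → (α t = 0 ↔ t = 0))
    (hsand : ∀ x ∈ D, α₁ (ω₁ x) ≤ V x ∧ V x ≤ α₂ (ω₂ x))
    (hdec : ∀ x ∈ D, ∀ y ∈ T x, V y ≤ V x - α (V x))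
    (hzero : ∀ x ∈ D, (V x = 0 ↔ x ∈ ASet D T ω₁)) :
    ∃ β : ℝ → ℝ → ℝ, IsClassKL β ∧
      ∀ x ∈ D, ∀ φ : ℕ → EuclideanSpace ℝ (Fin d), IsSolution T x φ →
        ∀ n : ℕ, ω₁ (φ n) ≤ β (ω₂ x) n := by
  have hαpos : ∀ t, 0 < t → 0 < α t := fun t ht =>
    (hαnn t ht.le).lt_of_ne' (mt (hαpd t ht.le).1 ht.ne')
  exact stmt19_general hTD hw1nn hw2nn hα₁ hα₂ hαcont.lowerSemicontinuousOn
    ((hαpd 0 le_rfl).2 rfl) hαpos hsand hdec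
end
end
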